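/- For every positive integer n and every positive integer m with Binary(m) and Leaves(m) = n, one has m ≤ q_n. That is, the binary caterpillar F_n also has the greatest Matula number among all binary trees with n leaves. -/

import Mathlib

/-- `nthPrime m` is the `m`-th prime number in ascending order (1-indexed):
`nthPrime 1 = 2`, `nthPrime 2 = 3`, `nthPrime 3 = 5`, `nthPrime 4 = 7`, ... -/
noncomputable def nthPrime (m : ℕ) : ℕ := Nat.nth Nat.Prime (m - 1)

/-- `MatulaTopological n` says that `n` is the Matula number of a topological tree
(a rooted tree with no vertex of outdegree 1): `MatulaTopological 1` holds, and for
`n > 1`, `MatulaTopological n` holds iff `n` has at least two prime factors counted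
with multiplicity and `MatulaTopological m` holds for every positive `m` such that the
prime `nthPrime m` divides `n`.  (Since `nthPrime m ∣ n` forces `m < n`, this
recursion is well-founded, so the inductive predicate is its unique fixed point.) -/
inductive MatulaTopological : ℕ → Prop
  | one : MatulaTopological 1
  | node (n : ℕ) (hn : 1 < n) (hbranches : 2 ≤ n.primeFactorsList.length)
      (hrec : ∀ m : ℕ, 1 ≤ m → nthPrime m ∣ n → MatulaTopological m) :
      MatulaTopological n

/-- `MatulaBinary n` says that `n` is the Matula number of a binary tree (every vertex
has outdegree 0 or 2): `MatulaBinary 1` holds, and for `n > 1`, `MatulaBinary n` holds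
iff `n = nthPrime a * nthPrime b` for some positive `a`, `b` with `MatulaBinary a`
and `MatulaBinary b`. -/
inductive MatulaBinary : ℕ → Prop
  | one : MatulaBinary 1
  | node (a b : ℕ) (ha : 1 ≤ a) (hb : 1 ≤ b)
      (hA : MatulaBinary a) (hB : MatulaBinary b) :
      MatulaBinary (nthPrime a * nthPrime b)

lemma count_prime_add_two_le (t : ℕ) (ht : 2 ≤ t) : Nat.count Nat.Prime t + 2 ≤ t := by
  induction t, ht using Nat.le_induction with
  | base =>
      simp [Nat.count_succ, Nat.count_zero]
      exact ⟨Nat.not_prime_zero, Nat.not_prime_one⟩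
  | succ n hn ih =>
      have : Nat.count Nat.Prime (n + 1) ≤ Nat.count Nat.Prime n + 1 := by
        rw [Nat.count_succ]; split <;> omega
      omega

/-- `matulaLeaves n` is the number of leaves of the rooted tree with Matula number `n`:
`matulaLeaves 1 = 1`, and if `n > 1` has multiset of prime factors
`nthPrime m₁, …, nthPrime m_r` (counted with multiplicity), then
`matulaLeaves n = matulaLeaves m₁ + ⋯ + matulaLeaves m_r`.  Here the 1-indexed prime
index of a prime factor `t` is recovered as `Nat.count Nat.Prime t + 1`, since
`nthPrime (Nat.count Nat.Prime t + 1) = Nat.nth Nat.Prime (Nat.count Nat.Prime t) = t`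
for prime `t`. -/
def matulaLeaves (n : ℕ) : ℕ :=
  if n ≤ 1 then 1
  else (n.primeFactorsList.attach.map
    (fun t => matulaLeaves (Nat.count Nat.Prime t.1 + 1))).sum
decreasing_by
  rename_i hn
  have hmem := t.2
  have hp : (t : ℕ).Prime := Nat.prime_of_mem_primeFactorsList hmem
  have hdvd : (t : ℕ) ∣ n := Nat.dvd_of_mem_primeFactorsList hmem
  have hle : (t : ℕ) ≤ n := Nat.le_of_dvd (by omega) hdvd
  have := count_prime_add_two_le t.1 hp.two_le
  omega

/-- The sequence `(q_k)_{k ≥ 1}` with `q 1 = 1` and `q k = 2 * nthPrime (q (k-1))` for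
`k > 1` (the value `q 0 = 1` is junk); `q n` is the Matula number of the `n`-leaf binary
caterpillar `F_n`, since `M(F_1) = 1` and `M(F_k) = p_1 · p_{M(F_{k-1})} = 2 · p_{M(F_{k-1})}`. -/
noncomputable def q : ℕ → ℕ
  | 0 => 1
  | 1 => 1
  | (k+2) => 2 * nthPrime (q (k+1))

/-!
Write `p_k` for the `k`-th prime and `t_k = p_{q_{k+1}}`, so that `t_0 = 2`, `t_{k+1} = p_{2 t_k}` and
`q_{k+2} = 2 t_k`. By induction on the tree, the theorem reduces to `t_a t_b ≤ 2 t_{a+b}`. Equality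
holds for `b = 0`, and increasing `b` to `b + 1` multiplies the left side by `t_{b+1} / t_b` and the
right side by `t_{a+b+1} / t_{a+b}`; the inequality therefore follows from `p_n / n ≤ p_m / m` with
`n = 2 t_b`, `m = 2 t_{a+b}`, where the induction hypothesis also provides `n p_n ≤ 2 m`.

Since `m` is about `n p_n / 2`, `log m` is about `2 log n`, and Chebyshev's bounds
`π(x) ≥ (log 2) x / log x` and `π(x) ≤ (2 log 2) x / log x` are just too weak to compare the two
ratios. The multinomial coefficient `(6n)! / ((3n)! (2n)! n!)` is divisible by all primes in
`(n, 6n]` and yields the constant `log 432 / 5 < 1.214` instead of `2 log 2`, which suffices for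
`n ≥ 886`. The remaining values `n = 4, 14, 86` are covered by small primes and linear lower bounds
for `p_m`.
-/

/-! ### Chebyshev's upper bound with constant `log 432 / 5` -/

theorem dvd_choose_of_mod_lt_mod {p n k : ℕ} (hp : p.Prime) (h : n % p < k % p) :
    p ∣ n.choose k := by
  have := Fact.mk hp
  have lucas := Choose.choose_modEq_choose_mod_mul_choose_div_nat (n := n) (k := k) (p := p)
  rw [Nat.choose_eq_zero_of_lt h, zero_mul] at lucas
  exact (Nat.modEq_zero_iff_dvd).1 lucas

theorem pow_mul_pow_mul_choose_le_add_pow (a b : ℕ) {n k : ℕ} (hk : k ≤ n) :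
    a ^ k * b ^ (n - k) * n.choose k ≤ (a + b) ^ n := by
  rw [add_pow]
  exact Finset.single_le_sum (f := fun i => a ^ i * b ^ (n - i) * n.choose i)
    (fun _ _ => Nat.zero_le _) (Finset.mem_range_succ_iff.2 hk)

theorem choose_mul_choose_le_pow (n : ℕ) :
    (6 * n).choose (3 * n) * (3 * n).choose n ≤ 432 ^ n := by
  have h64 : (6 * n).choose (3 * n) ≤ 64 ^ n :=
    (Nat.choose_le_two_pow _ _).trans_eq (by rw [pow_mul]; norm_num)
  have h27 : 4 ^ n * (3 * n).choose n ≤ 27 ^ n := by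
    have h := pow_mul_pow_mul_choose_le_add_pow 1 2 (show n ≤ 3 * n by lia)
    rw [one_pow, one_mul, show 3 * n - n = 2 * n by lia, pow_mul, pow_mul] at h
    exact h
  refine Nat.le_of_mul_le_mul_left ?_ (show 0 < 4 ^ n by positivity)
  calc 4 ^ n * ((6 * n).choose (3 * n) * (3 * n).choose n)
      = (6 * n).choose (3 * n) * (4 ^ n * (3 * n).choose n) := by ring
    _ ≤ 64 ^ n * 27 ^ n := Nat.mul_le_mul h64 h27
    _ = 4 ^ n * 432 ^ n := by rw [← mul_pow, ← mul_pow]; norm_num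

theorem dvd_choose_mul_choose {p n : ℕ} (hp : p.Prime) (hnp : n < p) (hpn : p ≤ 6 * n) :
    p ∣ (6 * n).choose (3 * n) * (3 * n).choose n := by
  suffices h : 6 * n % p < 3 * n % p ∨ 3 * n % p < n % p from
    h.elim (fun h => (dvd_choose_of_mod_lt_mod hp h).mul_right _)
      (fun h => (dvd_choose_of_mod_lt_mod hp h).mul_left _)
  have mod_eq {x : ℕ} (k : ℕ) (h₁ : k * p ≤ x) (h₂ : x < k * p + p) : x % p = x - k * p := by
    rw [← Nat.sub_mul_mod (by rwa [mul_comm]), mul_comm p, Nat.mod_eq_of_lt (by lia)]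
  rw [Nat.mod_eq_of_lt hnp]
  rcases lt_or_ge (3 * n) p with h₃ | h₃
  · left
    rw [mod_eq (x := 6 * n) 1 (by lia) (by lia), Nat.mod_eq_of_lt h₃]
    lia
  rcases lt_or_ge (2 * n) p with h₂ | h₂
  · right
    rw [mod_eq 1 (by lia) (by lia)]
    lia
  rcases lt_or_ge (3 * n) (2 * p) with h₁ | h₁
  · left
    rw [mod_eq (x := 6 * n) 3 (by lia) (by lia), mod_eq (x := 3 * n) 1 (by lia) (by lia)]
    lia
  · right
    rw [mod_eq 2 (by lia) (by lia)]
    lia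

theorem primorial_six_mul_le (n : ℕ) : primorial (6 * n) ≤ primorial n * 432 ^ n := by
  rw [show 6 * n = n + 5 * n by ring, primorial_add]
  refine Nat.mul_le_mul_left _ (le_trans (Nat.le_of_dvd ?_ ?_) (choose_mul_choose_le_pow n))
  · exact Nat.mul_pos (Nat.choose_pos (by lia)) (Nat.choose_pos (by lia))
  · refine Finset.prod_primes_dvd _ (fun p hp => (Finset.mem_filter.1 hp).2.prime) fun p hp => ?_
    obtain ⟨hmem, hp⟩ := Finset.mem_filter.1 hp
    rw [Finset.mem_Ico] at hmem
    exact dvd_choose_mul_choose hp (by lia) (by lia)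

-- `Nat.clog 6 N` counts the steps `N ↦ ⌈N / 6⌉` down to `1`; rounding up costs a factor of at most
-- `432` in each.
theorem primorial_pow_five_le (N : ℕ) : primorial N ^ 5 ≤ 432 ^ (N + 5 * Nat.clog 6 N) := by
  induction N using Nat.strong_induction_on with
  | _ N ih =>
  rcases lt_or_ge N 2 with hN | hN
  · interval_cases N <;> simp
  set n := (N + 6 - 1) / 6
  have hclog : Nat.clog 6 N = Nat.clog 6 n + 1 := Nat.clog_of_two_le (by norm_num) hN
  calc primorial N ^ 5 ≤ (primorial n * 432 ^ n) ^ 5 := by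
        gcongr
        exact (primorial_mono (by lia)).trans (primorial_six_mul_le n)
    _ = primorial n ^ 5 * 432 ^ (5 * n) := by rw [mul_pow, ← pow_mul, mul_comm n]
    _ ≤ 432 ^ (n + 5 * Nat.clog 6 n) * 432 ^ (5 * n) := by
        exact Nat.mul_le_mul_right _ (ih n (by lia))
    _ = 432 ^ (6 * n + 5 * Nat.clog 6 n) := by rw [← pow_add]; congr 1; ring
    _ ≤ 432 ^ (N + 5 * Nat.clog 6 N) := Nat.pow_le_pow_right (by norm_num) (by lia)

section Logarithms

open Real

theorem mul_log_le_mul_log_of_pow_le_pow {x y : ℝ} {a b : ℕ} (hx : 0 < x) (h : x ^ a ≤ y ^ b) :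
    a * log x ≤ b * log y := by
  simpa only [log_pow] using log_le_log (by positivity) h

theorem log_le_div_two_pow (k : ℕ) {x : ℝ} (hx : 0 < x) :
    log x ≤ x / 2 ^ k - 1 + k * log 2 := by
  have h := log_le_sub_one_of_pos (show 0 < x / 2 ^ k by positivity)
  rw [log_div hx.ne' (by positivity), log_pow] at h
  linarith

theorem log_add_one_le {x : ℝ} (hx : 0 < x) : log (x + 1) ≤ log x + 1 / x := by
  have h := log_le_sub_one_of_pos (show 0 < (x + 1) / x by positivity)
  rw [log_div (by positivity) hx.ne', add_div, div_self hx.ne'] at h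
  linarith

theorem log_432_lt : log 432 < 6.0685 := by
  rw [show (432 : ℝ) = 2 ^ 4 * 3 ^ 3 by norm_num, log_mul (by norm_num) (by norm_num), log_pow,
    log_pow]
  push_cast
  linarith [log_two_lt_d9, log_three_lt_d9]

end Logarithms

section Theta

open Real Chebyshev

theorem clog_mul_log_432_le {N : ℕ} (hN : 1 ≤ N) : Nat.clog 6 N * log 432 ≤ 4 * log (6 * N) := by
  have hpow : 6 ^ Nat.clog 6 N ≤ 6 * N := by
    rcases hN.eq_or_lt with rfl | hN
    · simp
    · have hpos : 0 < Nat.clog 6 N := Nat.clog_pos (by norm_num) hN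
      rw [← Nat.sub_one_add_one hpos.ne', pow_succ']
      exact Nat.mul_le_mul_left 6 (Nat.pow_pred_clog_lt_self (by norm_num) hN).le
  refine mul_log_le_mul_log_of_pow_le_pow (b := 4) (by norm_num) ?_
  calc (432 : ℝ) ^ Nat.clog 6 N ≤ (6 ^ 4) ^ Nat.clog 6 N := by gcongr; norm_num
    _ = (6 ^ Nat.clog 6 N) ^ 4 := pow_right_comm _ _ _
    _ ≤ (6 * N) ^ 4 := by gcongr; exact_mod_cast hpow

theorem theta_le_mul_add_log {N : ℕ} (hN : 1 ≤ N) :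
    θ N ≤ log 432 / 5 * N + 4 * log (6 * N) := by
  have h := mul_log_le_mul_log_of_pow_le_pow (x := primorial N) (y := 432)
    (by exact_mod_cast primorial_pos N) (by exact_mod_cast primorial_pow_five_le N)
  have hclog := clog_mul_log_432_le hN
  rw [theta_eq_log_primorial, Nat.floor_natCast]
  push_cast at h
  linarith

end Theta

/-! ### The primes as a sequence -/

theorem prime_nthPrime (n : ℕ) : (nthPrime n).Prime := Nat.prime_nth_prime _

theorem nthPrime_mono : Monotone nthPrime := fun _ _ h =>
  Nat.nth_monotone Nat.infinite_setOfPred_prime (Nat.sub_le_sub_right h 1)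

theorem lt_nthPrime (n : ℕ) : n < nthPrime n := by
  have := Nat.add_two_le_nth_prime (n - 1)
  unfold nthPrime
  lia

theorem primeCounting'_nthPrime (n : ℕ) : Nat.primeCounting' (nthPrime n) = n - 1 :=
  Nat.primeCounting'_nth_eq _

theorem primeCounting_nthPrime {n : ℕ} (hn : 1 ≤ n) : Nat.primeCounting (nthPrime n) = n := by
  rw [Nat.primeCounting, Nat.primeCounting', Nat.count_succ, if_pos (prime_nthPrime n),
    ← Nat.primeCounting', primeCounting'_nthPrime, Nat.sub_add_cancel hn]

theorem nthPrime_eq_of_primeCounting' {p n : ℕ} (hp : p.Prime)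
    (h : Nat.primeCounting' p + 1 = n) : nthPrime n = p := by
  subst h
  exact Nat.nth_count hp

theorem nthPrime_one : nthPrime 1 = 2 :=
  nthPrime_eq_of_primeCounting' (by norm_num) (by decide +kernel)

theorem nthPrime_four : nthPrime 4 = 7 :=
  nthPrime_eq_of_primeCounting' (by norm_num) (by decide +kernel)

theorem nthPrime_fourteen : nthPrime 14 = 43 :=
  nthPrime_eq_of_primeCounting' (by norm_num) (by decide +kernel)

theorem nthPrime_seventeen : nthPrime 17 = 59 :=
  nthPrime_eq_of_primeCounting' (by norm_num) (by decide +kernel)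

theorem nthPrime_eighty_six : nthPrime 86 = 443 :=
  nthPrime_eq_of_primeCounting' (by norm_num) (by decide +kernel)

-- Beyond `p_17 = 59`, at most `φ(6) = 2` of any six consecutive integers are prime.
theorem three_mul_le_nthPrime {n : ℕ} (hn : 17 ≤ n) : 3 * n ≤ nthPrime n := by
  have h59 : 59 ≤ nthPrime n := nthPrime_seventeen ▸ nthPrime_mono hn
  obtain ⟨m, hm⟩ := Nat.exists_eq_add_of_le h59
  have hcount := Nat.primeCounting'_add_le (a := 6) (k := 59) (by norm_num) (by norm_num) m
  rw [← hm, primeCounting'_nthPrime, ← nthPrime_seventeen, primeCounting'_nthPrime,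
    show Nat.totient 6 = 2 by decide] at hcount
  lia

section Bounds

open Real Chebyshev

theorem primesLE_nthPrime_succ {n : ℕ} (hn : 1 ≤ n) :
    Nat.primesLE (nthPrime (n + 1)) = insert (nthPrime (n + 1)) (Nat.primesLE (nthPrime n)) := by
  ext p
  simp only [Finset.mem_insert, Nat.mem_primesLE]
  constructor
  · rintro ⟨hle, hp⟩
    refine hle.eq_or_lt.imp_right fun hlt => ⟨?_, hp⟩
    refine Nat.le_nth_of_lt_nth_succ ?_ hp
    rwa [Nat.sub_add_cancel hn]
  · rintro (rfl | ⟨hle, hp⟩)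
    · exact ⟨le_rfl, prime_nthPrime _⟩
    · exact ⟨hle.trans (nthPrime_mono n.le_succ), hp⟩

theorem theta_nthPrime_succ {n : ℕ} (hn : 1 ≤ n) :
    θ (nthPrime (n + 1)) = θ (nthPrime n) + log (nthPrime (n + 1)) := by
  have hnot : nthPrime (n + 1) ∉ Nat.primesLE (nthPrime n) := fun h => by
    have := Nat.monotone_primeCounting (Nat.mem_primesLE.1 h).1
    rw [primeCounting_nthPrime hn, primeCounting_nthPrime n.succ_pos] at this
    lia
  rw [theta_eq_sum_primesLE_log, theta_eq_sum_primesLE_log, primesLE_nthPrime_succ hn,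
    Finset.sum_insert hnot, add_comm]

theorem succ_mul_log_succ_le {x : ℝ} (hx : 0 < x) :
    (x + 1) * log (x + 1) ≤ x * log x + log (x + 1) + 1 := by
  have h : x * log (x + 1) ≤ x * (log x + 1 / x) := by gcongr; exact log_add_one_le hx
  rw [mul_add, mul_one_div_cancel hx.ne'] at h
  linarith

-- Up to a boundary term, `θ (p_n) = ∑ log p_k ≥ n log s + log n!`, and `log n! ≥ n log n - n`.
theorem le_theta_nthPrime_of_mul_le {s : ℝ} (hs : 0 < s) {n₀ : ℕ} (hn₀ : 1 ≤ n₀)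
    (h : ∀ k : ℕ, n₀ ≤ k → s * k ≤ nthPrime k) {n : ℕ} (hn : n₀ ≤ n) :
    θ (nthPrime n₀) + (n * log n - n₀ * log n₀) + (log s - 1) * (n - n₀) ≤ θ (nthPrime n) := by
  induction n, hn using Nat.le_induction with
  | base => simp
  | succ n hn ih =>
    have hpos : (0 : ℝ) < n := by exact_mod_cast hn₀.trans hn
    have hprime : log s + log (n + 1) ≤ log (nthPrime (n + 1)) := by
      rw [← log_mul hs.ne' (by positivity)]
      exact log_le_log (by positivity) (by exact_mod_cast h (n + 1) (by lia))
    have hstep := succ_mul_log_succ_le hpos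
    rw [theta_nthPrime_succ (hn₀.trans hn)]
    push_cast
    linarith

theorem mul_log_le_theta_nthPrime_seventeen : 17 * log 17 ≤ θ (nthPrime 17) := by
  rw [nthPrime_seventeen, theta_eq_log_primorial, Nat.floor_natCast,
    show primorial 59 = 1922760350154212639070 by decide +kernel]
  have h := mul_log_le_mul_log_of_pow_le_pow (x := 17) (y := 1922760350154212639070)
    (a := 17) (b := 1) (by norm_num) (by norm_num)
  push_cast at h ⊢
  linarith

theorem mul_log_le_theta_nthPrime {n : ℕ} (hn : 17 ≤ n) : n * log n ≤ θ (nthPrime n) := by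
  have hgrow := le_theta_nthPrime_of_mul_le (s := 3) (by norm_num) (by norm_num)
    (fun k hk => by exact_mod_cast three_mul_le_nthPrime hk) hn
  have hbase := mul_log_le_theta_nthPrime_seventeen
  have hslope : 0 ≤ (log 3 - 1) * ((n : ℝ) - 17) :=
    mul_nonneg (by linarith [log_three_gt_d9]) (by simpa using hn)
  push_cast at hgrow
  linarith

theorem mul_log_le_mul_nthPrime {n : ℕ} (hn : 886 ≤ n) : n * log n ≤ 1.23 * nthPrime n := by
  have hlarge : (2658 : ℝ) ≤ nthPrime n := by
    exact_mod_cast (show 2658 ≤ 3 * n by lia).trans (three_mul_le_nthPrime (by lia))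
  have hlower := mul_log_le_theta_nthPrime (show 17 ≤ n by lia)
  have hupper := theta_le_mul_add_log (prime_nthPrime n).one_le
  have hconst : log 432 / 5 * nthPrime n ≤ 1.2137 * nthPrime n := by
    gcongr
    linarith [log_432_lt]
  have hlog := log_le_div_two_pow 14 (show (0 : ℝ) < 6 * nthPrime n by positivity)
  push_cast at hlog
  linarith [log_two_lt_d9]

theorem mul_le_nthPrime_of_le_log {s : ℝ} {n : ℕ} (hn : 886 ≤ n) (hs : 1.23 * s ≤ log n) :
    s * n ≤ nthPrime n := by
  have h : n * (1.23 * s) ≤ n * log n := by gcongr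
  linarith [mul_log_le_mul_nthPrime hn]

theorem five_mul_le_nthPrime {n : ℕ} (hn : 886 ≤ n) : 5 * (n : ℝ) ≤ nthPrime n := by
  refine mul_le_nthPrime_of_le_log hn ?_
  have hlog := mul_log_le_mul_log_of_pow_le_pow (x := 2) (y := n) (a := 9) (b := 1) (by norm_num)
    (by norm_num; exact_mod_cast (show 512 ≤ n by lia))
  push_cast at hlog
  linarith [log_two_gt_d9]

theorem eight_mul_le_nthPrime {n : ℕ} (hn : 19049 ≤ n) : 8 * (n : ℝ) ≤ nthPrime n := by
  refine mul_le_nthPrime_of_le_log (by lia) ?_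
  have hlog := mul_log_le_mul_log_of_pow_le_pow (x := 2) (y := n) (a := 71) (b := 5) (by norm_num)
    (le_trans (by norm_num : (2 : ℝ) ^ 71 ≤ 19049 ^ 5) (by gcongr; exact_mod_cast hn))
  push_cast at hlog
  linarith [log_two_gt_d9]

-- `1.06` is slightly less than `log 8 - 1`, the gain from `8 * n ≤ p_n`.
theorem mul_log_add_le_theta_nthPrime {n : ℕ} (hn : 1500000 ≤ n) :
    n * (log n + 1.06) ≤ θ (nthPrime n) := by
  have hgrow := le_theta_nthPrime_of_mul_le (s := 8) (by norm_num) (by norm_num)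
    (fun k hk => eight_mul_le_nthPrime hk) (show 19049 ≤ n by lia)
  have hbase := mul_log_le_theta_nthPrime (show 17 ≤ 19049 by norm_num)
  have hn' : (1500000 : ℝ) ≤ n := by exact_mod_cast hn
  have hlog8 : log 8 = 3 * log 2 := by
    rw [show (8 : ℝ) = 2 ^ 3 by norm_num, log_pow]
    norm_num
  have hslope : 1.079 * ((n : ℝ) - 19049) ≤ (log 8 - 1) * (n - 19049) :=
    mul_le_mul_of_nonneg_right (by linarith [log_two_gt_d9]) (by linarith)
  push_cast at hgrow hbase
  linarith

theorem mul_log_add_le_mul_nthPrime {n : ℕ} (hn : 1500000 ≤ n) :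
    n * (log n + 1.06) ≤ 1.214 * nthPrime n := by
  have hlarge : (4500000 : ℝ) ≤ nthPrime n := by
    exact_mod_cast (show 4500000 ≤ 3 * n by lia).trans (three_mul_le_nthPrime (by lia))
  have hlower := mul_log_add_le_theta_nthPrime hn
  have hupper := theta_le_mul_add_log (prime_nthPrime n).one_le
  have hconst : log 432 / 5 * nthPrime n ≤ 1.2137 * nthPrime n := by
    gcongr
    linarith [log_432_lt]
  have hlog := log_le_div_two_pow 20 (show (0 : ℝ) < 6 * nthPrime n by positivity)
  push_cast at hlog
  linarith [log_two_lt_d9]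

theorem nthPrime_mul_log_two_le {n : ℕ} (hn : 1 ≤ n) :
    nthPrime n * log 2 ≤ n * log (nthPrime n) + log (nthPrime n + 1) := by
  have hlower := psi_ge (nthPrime n)
  have hupper := psi_le_primeCounting_mul_log (nthPrime n)
  rw [primeCounting_nthPrime hn] at hupper
  linarith

-- `1.445` is slightly more than `1 / log 2`.
theorem nthPrime_le_mul_log {n : ℕ} (hn : 886 ≤ n) :
    nthPrime n ≤ 1.445 * (n * log (nthPrime n)) := by
  have hn' : (886 : ℝ) ≤ n := by exact_mod_cast hn
  have hlt : (n : ℝ) < nthPrime n := by exact_mod_cast lt_nthPrime n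
  have hpos : (0 : ℝ) < nthPrime n := by linarith
  have hlog_ge : 1 ≤ log (nthPrime n) := by
    rw [le_log_iff_exp_le hpos]
    linarith [exp_one_lt_d9]
  have hlog_succ : log (nthPrime n + 1) ≤ 1.01 * log (nthPrime n) := by
    have hinv : 1 / (nthPrime n : ℝ) ≤ 0.01 := by
      rw [div_le_iff₀ hpos]
      linarith
    linarith [log_add_one_le hpos]
  have hsmall : 886 * log (nthPrime n) ≤ n * log (nthPrime n) := by gcongr
  have hupper := nthPrime_mul_log_two_le (show 1 ≤ n by lia)
  have hlog_two : 0.6931471803 * nthPrime n ≤ nthPrime n * log 2 := by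
    rw [mul_comm]; gcongr; exact log_two_gt_d9.le
  linarith

-- `1.755` exceeds `1.214 * 1.445`, the product of the two Chebyshev constants.
theorem mul_log_nthPrime_lt {n : ℕ} (hn : 886 ≤ n) :
    1.755 * log (nthPrime n) < log n + log (nthPrime n) - log 2 + 1.06 := by
  have hn₀ : (0 : ℝ) < n := by exact_mod_cast (show 0 < n by lia)
  set L := log (nthPrime n)
  have hL₀ : 0 < L := log_pos (by exact_mod_cast (prime_nthPrime n).one_lt)
  have hlog_le : L ≤ log 1.445 + (log n + log L) := by
    rw [← log_mul hn₀.ne' hL₀.ne', ← log_mul (by norm_num) (by positivity)]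
    exact log_le_log (by exact_mod_cast (prime_nthPrime n).pos) (nthPrime_le_mul_log hn)
  have hlog_const : 15 * log 1.445 ≤ 8 * log 2 := by
    exact_mod_cast mul_log_le_mul_log_of_pow_le_pow (x := 1.445) (y := 2) (a := 15) (b := 8)
      (by norm_num) (by norm_num)
  have hlog_L : log L ≤ L / 8 - 1 + 3 * log 2 := by
    have h := log_le_div_two_pow 3 hL₀
    push_cast at h
    linarith
  have hlog_n : 19 * log 2 ≤ 2 * log n := by
    exact_mod_cast mul_log_le_mul_log_of_pow_le_pow (x := 2) (y := n) (a := 19) (b := 2)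
      (by norm_num) (le_trans (by norm_num : (2 : ℝ) ^ 19 ≤ 886 ^ 2)
        (by gcongr; exact_mod_cast hn))
  linarith [log_two_gt_d9, log_two_lt_d9]

theorem nthPrime_mul_le_nthPrime_mul {n m : ℕ} (hn : 886 ≤ n) (hnm : n * nthPrime n ≤ 2 * m) :
    nthPrime n * m ≤ nthPrime m * n := by
  have hn₀ : (0 : ℝ) < n := by exact_mod_cast (show 0 < n by lia)
  have hp₀ : (0 : ℝ) < nthPrime n := by exact_mod_cast (prime_nthPrime n).pos
  have hm : 1500000 ≤ m := by
    have hp : 5 * n ≤ nthPrime n := by exact_mod_cast five_mul_le_nthPrime hn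
    nlinarith
  have hlog_m : log n + log (nthPrime n) - log 2 ≤ log m := by
    rw [← log_mul hn₀.ne' hp₀.ne', ← log_div (by positivity) (by norm_num)]
    refine log_le_log (by positivity) ?_
    rw [div_le_iff₀ (by norm_num), mul_comm (m : ℝ)]
    exact_mod_cast hnm
  have hlog_lt := mul_log_nthPrime_lt hn
  have hlog₀ : 0 ≤ log (nthPrime n) := log_natCast_nonneg _
  suffices h : 1.214 * ((nthPrime n : ℝ) * m) ≤ 1.214 * (nthPrime m * n) by
    exact_mod_cast le_of_mul_le_mul_left h (by norm_num)
  calc 1.214 * ((nthPrime n : ℝ) * m)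
      ≤ 1.214 * (1.445 * (n * log (nthPrime n)) * m) := by gcongr; exact nthPrime_le_mul_log hn
    _ = 1.214 * 1.445 * log (nthPrime n) * (m * n) := by ring
    _ ≤ (log m + 1.06) * (m * n) := by gcongr; linarith
    _ = m * (log m + 1.06) * n := by ring
    _ ≤ 1.214 * nthPrime m * n :=
        mul_le_mul_of_nonneg_right (mul_log_add_le_mul_nthPrime hm) hn₀.le
    _ = 1.214 * (nthPrime m * n) := by ring

end Bounds

/-! ### Caterpillars -/

/-- The prime `t_k = p_{q_{k+1}}` contributed by a branch that is a caterpillar with `k + 1` leaves,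
that is, with `k` inner vertices; the shift makes the product bound below additive in the index. -/
noncomputable def caterpillarPrime (k : ℕ) : ℕ := nthPrime (q (k + 1))

theorem caterpillarPrime_zero : caterpillarPrime 0 = 2 := nthPrime_one

theorem caterpillarPrime_succ (k : ℕ) :
    caterpillarPrime (k + 1) = nthPrime (2 * caterpillarPrime k) := rfl

theorem caterpillarPrime_one : caterpillarPrime 1 = 7 := by
  rw [caterpillarPrime_succ, caterpillarPrime_zero, nthPrime_four]

theorem caterpillarPrime_two : caterpillarPrime 2 = 43 := by
  rw [caterpillarPrime_succ, caterpillarPrime_one, nthPrime_fourteen]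

theorem caterpillarPrime_three : caterpillarPrime 3 = 443 := by
  rw [caterpillarPrime_succ, caterpillarPrime_two, nthPrime_eighty_six]

theorem caterpillarPrime_mono : Monotone caterpillarPrime := monotone_nat_of_le_succ fun k => by
  have := lt_nthPrime (2 * caterpillarPrime k)
  rw [caterpillarPrime_succ]
  lia

theorem caterpillarPrime_succ_mul_le {c d : ℕ} (hcd : 2 * c + 1 ≤ d)
    (h : caterpillarPrime c * caterpillarPrime (c + 1) ≤ 2 * caterpillarPrime d) :
    caterpillarPrime (c + 1) * caterpillarPrime d ≤
      caterpillarPrime (d + 1) * caterpillarPrime c := by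
  have hd := caterpillarPrime_mono hcd
  rw [caterpillarPrime_succ d]
  set y := caterpillarPrime d
  match c with
  | 0 =>
    simp only [mul_zero, zero_add, caterpillarPrime_zero, caterpillarPrime_one] at hd ⊢
    rcases lt_or_ge y 9 with hy | hy
    · have := nthPrime_mono (show 14 ≤ 2 * y by lia)
      rw [nthPrime_fourteen] at this
      lia
    · have := three_mul_le_nthPrime (show 17 ≤ 2 * y by lia)
      lia
  | 1 =>
    simp only [mul_one, Nat.reduceAdd, caterpillarPrime_one, caterpillarPrime_two,
      caterpillarPrime_three] at hd ⊢
    have : 5 * (2 * y) ≤ nthPrime (2 * y) := by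
      exact_mod_cast five_mul_le_nthPrime (show 886 ≤ 2 * y by lia)
    lia
  | 2 =>
    simp only [Nat.reduceAdd, caterpillarPrime_two, caterpillarPrime_three] at h ⊢
    have : 8 * (2 * y) ≤ nthPrime (2 * y) := by
      exact_mod_cast eight_mul_le_nthPrime (show 19049 ≤ 2 * y by lia)
    lia
  | c + 3 =>
    have hc : 443 ≤ caterpillarPrime (c + 3) :=
      caterpillarPrime_three ▸ caterpillarPrime_mono (Nat.le_add_left 3 c)
    rw [caterpillarPrime_succ (c + 3)] at h ⊢
    have := nthPrime_mul_le_nthPrime_mul (n := 2 * caterpillarPrime (c + 3)) (m := 2 * y)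
      (by lia) (by linarith)
    linarith

theorem caterpillarPrime_mul_le (a b : ℕ) :
    caterpillarPrime a * caterpillarPrime b ≤ 2 * caterpillarPrime (a + b) := by
  induction hs : a + b using Nat.strong_induction_on generalizing a b with
  | _ s ih =>
  subst hs
  wlog hba : b ≤ a generalizing a b
  · rw [mul_comm, add_comm a]
    exact this b a (by rwa [add_comm]) (le_of_not_ge hba)
  cases b with
  | zero => rw [caterpillarPrime_zero, mul_comm, add_zero]
  | succ c =>
    have hac := ih (a + c) (by lia) a c rfl
    have hcc : caterpillarPrime c * caterpillarPrime (c + 1) ≤ 2 * caterpillarPrime (a + c) :=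
      (ih _ (by lia) c (c + 1) rfl).trans (Nat.mul_le_mul_left _ (caterpillarPrime_mono (by lia)))
    have hratio := caterpillarPrime_succ_mul_le (show 2 * c + 1 ≤ a + c by lia) hcc
    have hpos : 0 < caterpillarPrime (a + c) := (prime_nthPrime _).pos
    refine Nat.le_of_mul_le_mul_right ?_ hpos
    calc caterpillarPrime a * caterpillarPrime (c + 1) * caterpillarPrime (a + c)
        = caterpillarPrime a * (caterpillarPrime (c + 1) * caterpillarPrime (a + c)) := by ring
      _ ≤ caterpillarPrime a * (caterpillarPrime (a + c + 1) * caterpillarPrime c) := by gcongr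
      _ = caterpillarPrime (a + c + 1) * (caterpillarPrime a * caterpillarPrime c) := by ring
      _ ≤ caterpillarPrime (a + c + 1) * (2 * caterpillarPrime (a + c)) := by gcongr
      _ = 2 * caterpillarPrime (a + (c + 1)) * caterpillarPrime (a + c) := by
        rw [← add_assoc]
        ring

/-! ### Binary trees -/

theorem nthPrime_mul_nthPrime_le_q_add {i j : ℕ} (hi : 1 ≤ i) (hj : 1 ≤ j) :
    nthPrime (q i) * nthPrime (q j) ≤ q (i + j) := by
  obtain ⟨a, rfl⟩ := Nat.exists_eq_add_of_le' hi
  obtain ⟨b, rfl⟩ := Nat.exists_eq_add_of_le' hj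
  rw [show a + 1 + (b + 1) = a + b + 2 by ring]
  exact caterpillarPrime_mul_le a b

theorem matulaLeaves_one : matulaLeaves 1 = 1 := by rw [matulaLeaves, if_pos le_rfl]

theorem matulaLeaves_nthPrime_mul_nthPrime {a b : ℕ} (ha : 1 ≤ a) (hb : 1 ≤ b) :
    matulaLeaves (nthPrime a * nthPrime b) = matulaLeaves a + matulaLeaves b := by
  have hpa := prime_nthPrime a
  have hpb := prime_nthPrime b
  have hperm := Nat.perm_primeFactorsList_mul hpa.ne_zero hpb.ne_zero
  rw [Nat.primeFactorsList_prime hpa, Nat.primeFactorsList_prime hpb] at hperm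
  have hindex {k : ℕ} (hk : 1 ≤ k) : Nat.count Nat.Prime (nthPrime k) + 1 = k := by
    rw [← Nat.primeCounting', primeCounting'_nthPrime, Nat.sub_add_cancel hk]
  rw [matulaLeaves, if_neg (Nat.one_lt_mul_iff.2 ⟨hpa.pos, hpb.pos, .inl hpa.one_lt⟩).not_ge,
    List.attach_map_val (f := fun t => matulaLeaves (Nat.count Nat.Prime t + 1)),
    (hperm.map _).sum_eq]
  simp only [List.cons_append, List.nil_append, List.map_cons, List.map_nil, List.sum_cons,
    List.sum_nil, add_zero, hindex ha, hindex hb]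

theorem MatulaBinary.one_le_matulaLeaves {m : ℕ} (hm : MatulaBinary m) : 1 ≤ matulaLeaves m := by
  induction hm with
  | one => exact matulaLeaves_one.ge
  | node a b ha hb _ _ iha _ =>
    rw [matulaLeaves_nthPrime_mul_nthPrime ha hb]
    exact iha.trans (Nat.le_add_right _ _)

theorem MatulaBinary.le_q_matulaLeaves {m : ℕ} (hm : MatulaBinary m) : m ≤ q (matulaLeaves m) := by
  induction hm with
  | one => rw [matulaLeaves_one, q]
  | node a b ha hb hA hB iha ihb =>
    rw [matulaLeaves_nthPrime_mul_nthPrime ha hb]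
    calc nthPrime a * nthPrime b
        ≤ nthPrime (q (matulaLeaves a)) * nthPrime (q (matulaLeaves b)) :=
          Nat.mul_le_mul (nthPrime_mono iha) (nthPrime_mono ihb)
      _ ≤ q (matulaLeaves a + matulaLeaves b) :=
          nthPrime_mul_nthPrime_le_q_add hA.one_le_matulaLeaves hB.one_le_matulaLeaves

/-- Every binary tree with `n` leaves has Matula number at most `q n`: the binary
caterpillar `F_n` also has the greatest Matula number among all binary trees with
`n` leaves. -/
theorem caterpillar_maximizes_matula_over_binary (n : ℕ) (hn : 1 ≤ n)
    (m : ℕ) (hm : 1 ≤ m) (hB : MatulaBinary m) (hL : matulaLeaves m = n) :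
    m ≤ q n := by
  subst hL
  exact hB.le_q_matulaLeaves
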